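/- In a GSAS with independent availabilities, if two strategy profiles π and π' both implement the same tuple μ = (μ_1,…,μ_n) of distributions, then for every ε ≥ 0, π is an ε-Nash equilibrium if and only if π' is an ε-Nash equilibrium. -/

import Mathlib

/-!
Since availabilities are independent, the sum over availability profiles of
`∏ j, ρ j (S j) * π j (a j | S j)` factors as the product over `j` of the marginals
(`payoff_eq_mixedPayoff`). Hence payoffs depend only on marginals. Two profiles with equal
marginals also have equal marginals after the same unilateral deviation, so both sides of every
`ε`-Nash inequality agree.
-/

open Finset

/-- A game with stochastic action sets (GSAS) with independent availabilities. -/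
structure GSAS (ι : Type) [Fintype ι] [DecidableEq ι]
    (A : ι → Type) [∀ i, Fintype (A i)] [∀ i, DecidableEq (A i)] [∀ i, Nonempty (A i)] where
  /-- utility functions, with values in `[-1, 1]` -/
  u : ι → (∀ j, A j) → ℝ
  u_bdd : ∀ i a, u i a ∈ Set.Icc (-1 : ℝ) 1
  /-- the collection `𝒮 i` of possible availability sets of player `i` -/
  avail : ∀ i, Finset (Finset (A i))
  avail_nonempty : ∀ i, ∀ S ∈ avail i, S.Nonempty
  /-- `ρ i` is a probability distribution on `avail i` -/
  ρ : ∀ i, Finset (A i) → ℝ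
  ρ_nonneg : ∀ i S, 0 ≤ ρ i S
  ρ_supp : ∀ i S, S ∉ avail i → ρ i S = 0
  ρ_sum : ∀ i, ∑ S ∈ avail i, ρ i S = 1

namespace GSAS

variable {ι : Type} [Fintype ι] [DecidableEq ι]
  {A : ι → Type} [∀ i, Fintype (A i)] [∀ i, DecidableEq (A i)] [∀ i, Nonempty (A i)]

/-- A (mixed) strategy of player `i`: for each availability set a probability
distribution on `A i` supported in the availability set. -/
structure Strategy (G : GSAS ι A) (i : ι) where
  π : Finset (A i) → A i → ℝ
  nonneg : ∀ S a, 0 ≤ π S a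
  sum_one : ∀ S ∈ G.avail i, ∑ a, π S a = 1
  supp : ∀ S ∈ G.avail i, ∀ a ∉ S, π S a = 0

variable (G : GSAS ι A)

/-- The marginal distribution `ℙ[a ; ρ i, π]` induced by a strategy. -/
noncomputable def marginal {i : ι} (σ : G.Strategy i) (a : A i) : ℝ :=
  ∑ S ∈ G.avail i, G.ρ i S * σ.π S a

/-- `σ` implements the distribution `μ` on `A i`. -/
def Implements {i : ι} (σ : G.Strategy i) (μ : A i → ℝ) : Prop :=
  ∀ a, μ a = G.marginal σ a

/-- Expected payoff `U_i(π)` of a strategy profile. -/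
noncomputable def payoff (σ : ∀ i, G.Strategy i) (i : ι) : ℝ :=
  ∑ S ∈ Fintype.piFinset G.avail,
    (∏ j, G.ρ j (S j)) * ∑ a : ∀ j, A j, (∏ j, (σ j).π (S j) (a j)) * G.u i a

/-- Expected payoff `U_i(μ)` of a profile of mixed (marginal) distributions. -/
noncomputable def mixedPayoff (μ : ∀ j, A j → ℝ) (i : ι) : ℝ :=
  ∑ a : ∀ j, A j, (∏ j, μ j (a j)) * G.u i a

/-- `σ` is an `ε`-Nash equilibrium of the GSAS: no player can gain more than `ε`
by unilaterally deviating to any other strategy. -/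
def IsEpsNash (σ : ∀ i, G.Strategy i) (ε : ℝ) : Prop :=
  ∀ i, ∀ σ' : G.Strategy i, G.payoff (Function.update σ i σ') i ≤ G.payoff σ i + ε

/-- The set `M i` of implementable distributions of player `i`. -/
def implementableSet (i : ι) : Set (A i → ℝ) :=
  {μ | ∃ σ : G.Strategy i, G.Implements σ μ}

end GSAS

namespace GSAS

/-- By independence of the availabilities, the expected payoff depends on a strategy profile
only through its marginals. -/
theorem payoff_eq_mixedPayoff {ι : Type} [Fintype ι] [DecidableEq ι]
    {A : ι → Type} [∀ i, Fintype (A i)] [∀ i, DecidableEq (A i)] [∀ i, Nonempty (A i)]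
    (G : GSAS ι A) (σ : ∀ i, G.Strategy i) (i : ι) :
    G.payoff σ i = G.mixedPayoff (fun j => G.marginal (σ j)) i := by
  unfold payoff mixedPayoff marginal
  simp_rw [Finset.mul_sum]
  rw [Finset.sum_comm]
  refine Finset.sum_congr rfl fun a _ => ?_
  rw [Finset.prod_univ_sum, Finset.sum_mul]
  refine Finset.sum_congr rfl fun S _ => ?_
  rw [Finset.prod_mul_distrib, mul_assoc]

theorem payoff_congr {ι : Type} [Fintype ι] [DecidableEq ι]
    {A : ι → Type} [∀ i, Fintype (A i)] [∀ i, DecidableEq (A i)] [∀ i, Nonempty (A i)]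
    (G : GSAS ι A) {σ σ' : ∀ i, G.Strategy i}
    (h : ∀ j, G.marginal (σ j) = G.marginal (σ' j)) (i : ι) :
    G.payoff σ i = G.payoff σ' i := by
  simp only [payoff_eq_mixedPayoff, h]

theorem payoff_update_congr {ι : Type} [Fintype ι] [DecidableEq ι]
    {A : ι → Type} [∀ i, Fintype (A i)] [∀ i, DecidableEq (A i)] [∀ i, Nonempty (A i)]
    (G : GSAS ι A) {σ σ' : ∀ i, G.Strategy i}
    (h : ∀ j, G.marginal (σ j) = G.marginal (σ' j)) (i : ι) (τ : G.Strategy i) :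
    G.payoff (Function.update σ i τ) i = G.payoff (Function.update σ' i τ) i := by
  refine G.payoff_congr (fun j => ?_) i
  by_cases hj : j = i
  · subst hj
    simp
  · simp [hj, h j]

end GSAS

/-- If two strategy profiles implement the same tuple `μ` of
distributions, then for every `ε ≥ 0`, one is an `ε`-Nash equilibrium iff the other is. -/
theorem stmt2 {ι : Type} [Fintype ι] [DecidableEq ι]
    {A : ι → Type} [∀ i, Fintype (A i)] [∀ i, DecidableEq (A i)] [∀ i, Nonempty (A i)]
    (G : GSAS ι A) (σ σ' : ∀ i, G.Strategy i) (μ : ∀ j, A j → ℝ)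
    (h1 : ∀ j, G.Implements (σ j) (μ j)) (h2 : ∀ j, G.Implements (σ' j) (μ j))
    (ε : ℝ) (hε : 0 ≤ ε) :
    G.IsEpsNash σ ε ↔ G.IsEpsNash σ' ε := by
  have h : ∀ j, G.marginal (σ j) = G.marginal (σ' j) := fun j =>
    funext fun a => (h1 j a).symm.trans (h2 j a)
  unfold GSAS.IsEpsNash
  simp only [G.payoff_congr h, G.payoff_update_congr h]
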